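/- Let N ≥ 3 and L ≥ 1 be integers, E ≥ 1, D > 0, and let A_g ∈ ℝ^{E×N}, A_ℓ ∈ ℝ^{E×L}, d ∈ ℝ^L, f ∈ ℝ^E, and s̲, s̄ ∈ ℝ^N with 0 ≤ s̲_n ≤ s̄_n for all n. Define the feasible set F = { s ∈ ℝ^N : ∑_{n=1}^N s_n = D, s̲_n ≤ s_n ≤ s̄_n for all n, and −f ≤ A_g·s + A_ℓ·d ≤ f componentwise }. For each n let c_n : ℝ → ℝ be convex, strictly increasing and differentiable on [0, ∞) with c_n(0) ≥ 0, and let ĉ_n(s) = (1 + s/((N−2)·D))·c_n(s) − (1/((N−2)·D))·∫₀^s c_n(x) dx. If s* ∈ F minimizes ∑_n c_n(s_n) over F and s** ∈ F minimizes ∑_n ĉ_n(s_n) over F, then ∑_{n=1}^N c_n(s**_n) ≤ ( 1 + max_n min{ s̄_n, D − ∑_{m≠n} s̲_m } / ((N−2)·D) ) · ∑_{n=1}^N c_n(s*_n). -/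

import Mathlib

/-!
The modified cost sandwiches the true cost. With `K = (N - 2) D`,
`ĉ(s) - c(s) = (s c(s) - ∫₀ˢ c) / K`, which is nonnegative because `c` is nondecreasing and is at
most `(s / K) c(s)` because `c` is nonnegative. Passing from `c` to `ĉ`, using the optimality of
`s**` for `ĉ`, and passing back to `c` at the competitor costs at most the factor `1 + M / K`, where
`M` bounds every component of a feasible profile.
-/

open Finset

theorem integral_le_sub_mul_of_monotoneOn {f : ℝ → ℝ} {a b : ℝ} (hab : a ≤ b)
    (hf : MonotoneOn f (Set.Icc a b)) : ∫ x in a..b, f x ≤ (b - a) * f b := by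
  have hint : IntervalIntegrable f MeasureTheory.volume a b :=
    MonotoneOn.intervalIntegrable (by rwa [Set.uIcc_of_le hab])
  calc ∫ x in a..b, f x ≤ ∫ _ in a..b, f b :=
        intervalIntegral.integral_mono_on hab hint intervalIntegrable_const
          fun x hx => hf hx (Set.right_mem_Icc.2 hab) hx.2
    _ = (b - a) * f b := by rw [intervalIntegral.integral_const, smul_eq_mul]

/-- The modified cost `ĉ` of a generator with cost `c`, which supply function equilibria minimize
in aggregate. The scale `K` is `(N - 2) D` in the market with `N` generators and demand `D`. -/
noncomputable def modifiedCost (K : ℝ) (c : ℝ → ℝ) (s : ℝ) : ℝ :=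
  (1 + s / K) * c s - (1 / K) * ∫ x in (0 : ℝ)..s, c x

section ModifiedCost

variable {K s M : ℝ} {c : ℝ → ℝ}

theorem le_modifiedCost (hK : 0 < K) (hs : 0 ≤ s) (hc : MonotoneOn c (Set.Icc 0 s)) :
    c s ≤ modifiedCost K c s := by
  have hint : ∫ x in (0 : ℝ)..s, c x ≤ s * c s := by
    simpa only [sub_zero] using integral_le_sub_mul_of_monotoneOn hs hc
  calc c s ≤ c s + (s * c s - ∫ x in (0 : ℝ)..s, c x) / K :=
        le_add_of_nonneg_right (div_nonneg (sub_nonneg.2 hint) hK.le)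
    _ = modifiedCost K c s := by rw [modifiedCost]; ring

theorem modifiedCost_le_mul (hK : 0 < K) (hs : 0 ≤ s) (hsM : s ≤ M)
    (hc : ∀ x ∈ Set.Icc 0 s, 0 ≤ c x) : modifiedCost K c s ≤ (1 + M / K) * c s := by
  have hint : 0 ≤ ∫ x in (0 : ℝ)..s, c x := intervalIntegral.integral_nonneg hs hc
  have hcs : 0 ≤ c s := hc s (Set.right_mem_Icc.2 hs)
  calc modifiedCost K c s ≤ (1 + s / K) * c s := sub_le_self _ (by positivity)
    _ ≤ (1 + M / K) * c s := by gcongr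

end ModifiedCost

section Dispatch

variable {ι : Type*} [Fintype ι] {D : ℝ} {slo shi : ι → ℝ}

/-- The supply profiles that meet the demand `D` within the capacity limits `slo` and `shi`.
Network constraints cut out a subset of these. -/
def supplyProfiles (D : ℝ) (slo shi : ι → ℝ) : Set (ι → ℝ) :=
  {s | ∑ n, s n = D ∧ ∀ n, slo n ≤ s n ∧ s n ≤ shi n}

variable [DecidableEq ι]

/-- The effective capacity of generator `n`: its own limit, or the demand left over when all the
other generators produce their minimum, whichever is smaller. -/
def effectiveCapacity (D : ℝ) (slo shi : ι → ℝ) (n : ι) : ℝ :=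
  min (shi n) (D - ∑ m ∈ univ.erase n, slo m)

theorem le_effectiveCapacity {s : ι → ℝ} (hs : s ∈ supplyProfiles D slo shi) (n : ι) :
    s n ≤ effectiveCapacity D slo shi n := by
  obtain ⟨hsum, hlim⟩ := hs
  refine le_min (hlim n).2 (le_sub_iff_add_le.2 ?_)
  calc s n + ∑ m ∈ univ.erase n, slo m ≤ s n + ∑ m ∈ univ.erase n, s m := by
        gcongr with m
        exact (hlim m).1
    _ = D := by rw [add_sum_erase _ _ (mem_univ n), hsum]

theorem poa_upper_bound_dispatch_general [Nonempty ι] {K : ℝ} (hK : 0 < K) (hslo : ∀ n, 0 ≤ slo n)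
    {F : Set (ι → ℝ)} (hF : F ⊆ supplyProfiles D slo shi) {c : ι → ℝ → ℝ}
    (hmono : ∀ n, MonotoneOn (c n) (Set.Ici 0)) (hc0 : ∀ n, 0 ≤ c n 0) {s t : ι → ℝ}
    (hs : s ∈ F) (hmin : IsMinOn (fun u => ∑ n, modifiedCost K (c n) (u n)) F s) (ht : t ∈ F) :
    ∑ n, c n (s n) ≤
      (1 + univ.sup' univ_nonempty (effectiveCapacity D slo shi) / K) * ∑ n, c n (t n) := by
  have supply_nonneg : ∀ u ∈ F, ∀ n, 0 ≤ u n := fun u hu n =>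
    (hslo n).trans ((hF hu).2 n).1
  have cost_nonneg : ∀ n x, 0 ≤ x → 0 ≤ c n x := fun n x hx =>
    (hc0 n).trans (hmono n Set.self_mem_Ici hx hx)
  have le_maxCapacity : ∀ n, t n ≤ univ.sup' univ_nonempty (effectiveCapacity D slo shi) :=
    fun n => (le_effectiveCapacity (hF ht) n).trans (le_sup' _ (mem_univ n))
  calc ∑ n, c n (s n) ≤ ∑ n, modifiedCost K (c n) (s n) := sum_le_sum fun n _ =>
        le_modifiedCost hK (supply_nonneg s hs n) ((hmono n).mono Set.Icc_subset_Ici_self)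
    _ ≤ ∑ n, modifiedCost K (c n) (t n) := hmin ht
    _ ≤ ∑ n, (1 + univ.sup' univ_nonempty (effectiveCapacity D slo shi) / K) * c n (t n) :=
        sum_le_sum fun n _ => modifiedCost_le_mul hK (supply_nonneg t ht n) (le_maxCapacity n)
          fun x hx => cost_nonneg n x hx.1
    _ = _ := (mul_sum ..).symm

end Dispatch

/-- Price-of-anarchy upper bound (capacity-dependent part of Theorem 1) for the explicit
polyhedral feasible set of economic dispatch: with `N ≥ 3` generators, total demand `D > 0`,
capacity limits `0 ≤ s̲ ≤ s̄`, and line-flow constraints `−f ≤ A_g·s + A_ℓ·d ≤ f`, if `s*`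
minimizes the true total cost and `s**` minimizes the total modified cost over the feasible
set, then `∑ c_n(s**_n) ≤ (1 + max_n min{s̄_n, D − ∑_{m≠n} s̲_m} / ((N−2)D)) · ∑ c_n(s*_n)`. -/
theorem poa_upper_bound_dispatch
    (N L E : ℕ) (hN : 3 ≤ N) (hL : 1 ≤ L) (hE : 1 ≤ E) (D : ℝ) (hD : 0 < D)
    (Ag : Matrix (Fin E) (Fin N) ℝ) (Al : Matrix (Fin E) (Fin L) ℝ)
    (d : Fin L → ℝ) (f : Fin E → ℝ)
    (slo shi : Fin N → ℝ)
    (hcap : ∀ n, 0 ≤ slo n ∧ slo n ≤ shi n)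
    (F : Set (Fin N → ℝ))
    (hF : F = {s : Fin N → ℝ |
      (∑ n, s n) = D ∧
      (∀ n, slo n ≤ s n ∧ s n ≤ shi n) ∧
      (∀ e, -(f e) ≤ (Ag.mulVec s + Al.mulVec d) e ∧ (Ag.mulVec s + Al.mulVec d) e ≤ f e)})
    (c : Fin N → ℝ → ℝ)
    (hconv : ∀ n, ConvexOn ℝ (Set.Ici (0 : ℝ)) (c n))
    (hmono : ∀ n, StrictMonoOn (c n) (Set.Ici (0 : ℝ)))
    (hdiff : ∀ n, DifferentiableOn ℝ (c n) (Set.Ici (0 : ℝ)))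
    (hc0 : ∀ n, 0 ≤ c n 0)
    (chat : Fin N → ℝ → ℝ)
    (hchat : ∀ n s, chat n s = (1 + s / (((N : ℝ) - 2) * D)) * c n s
      - (1 / (((N : ℝ) - 2) * D)) * ∫ x in (0:ℝ)..s, c n x)
    (sStar sStarStar : Fin N → ℝ)
    (hsStar : sStar ∈ F) (hsStarStar : sStarStar ∈ F)
    (hminStar : ∀ t ∈ F, ∑ n, c n (sStar n) ≤ ∑ n, c n (t n))
    (hminStarStar : ∀ t ∈ F, ∑ n, chat n (sStarStar n) ≤ ∑ n, chat n (t n)) :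
    ∑ n, c n (sStarStar n) ≤
      (1 + (Finset.univ.sup' (Finset.univ_nonempty_iff.mpr
          (Fin.pos_iff_nonempty.mp (by omega)))
          (fun n => min (shi n) (D - ∑ m ∈ Finset.univ.erase n, slo m)))
        / (((N : ℝ) - 2) * D)) * ∑ n, c n (sStar n) := by
  obtain rfl : chat = fun n => modifiedCost (((N : ℝ) - 2) * D) (c n) := funext₂ hchat
  have : Nonempty (Fin N) := Fin.pos_iff_nonempty.mp (by omega)
  have hK : 0 < ((N : ℝ) - 2) * D := mul_pos (sub_pos.2 (by exact_mod_cast hN)) hD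
  have hsub : F ⊆ supplyProfiles D slo shi := hF ▸ fun _ hs => ⟨hs.1, hs.2.1⟩
  exact poa_upper_bound_dispatch_general hK (fun n => (hcap n).1) hsub
    (fun n => (hmono n).monotoneOn) hc0 hsStarStar hminStarStar hsStar
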